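/- Let n, m ≥ 1 and let v₁, …, v_m ∈ ℤⁿ be such that 0 lies in the interior of the convex hull P = conv{v₁, …, v_m} ⊆ ℝⁿ. Let L ⊆ ℚᵐ be the linear subspace consisting of all vectors (⟨ν, v₁⟩, …, ⟨ν, v_m⟩) as ν ranges over ℚ-linear functionals on ℚⁿ. Fix an index i ∈ {1, …, m} and let T = { l : v_l is not an extreme point of P }. Then the images in the quotient vector space ℚᵐ/L of the standard basis vectors e_l, for l ∈ T ∪ {i}, form a linearly independent family. -/

import Mathlib

/-- The linear map sending a `ℚ`-linear functional `ν` on `ℚⁿ` to the vector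
`(⟨ν, v₁⟩, …, ⟨ν, v_m⟩) ∈ ℚᵐ`, where `v₁, …, v_m ∈ ℤⁿ` are viewed inside `ℚⁿ`. -/
def evalOnRays (n m : ℕ) (v : Fin m → Fin n → ℤ) :
    ((Fin n → ℚ) →ₗ[ℚ] ℚ) →ₗ[ℚ] (Fin m → ℚ) where
  toFun ν := fun l => ν (fun k => (v l k : ℚ))
  map_add' _ _ := rfl
  map_smul' _ _ := rfl

/-!
A relation among the classes of `e_l`, `l ∈ T ∪ {i}`, is a functional `ν` with `⟨ν, v_l⟩ = 0` for
all `l ∉ T ∪ {i}`. Extended to real scalars, `ν` vanishes at every vertex of the polytope `P` except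
possibly `v_i`, so it has constant sign on the vertices and hence on `P`. Since `P` is a
neighbourhood of `0`, this forces `ν = 0`.
-/

section LinearFunctionals

variable {E : Type*} [AddCommGroup E] [Module ℝ E] {s : Set E} {f : E →ₗ[ℝ] ℝ}

lemma linearMap_eq_zero_of_nonneg_on_absorbent (hs : Absorbent ℝ s) (hf : ∀ x ∈ s, 0 ≤ f x) :
    f = 0 := by
  have f_nonneg (x : E) : 0 ≤ f x := by
    have small_smul_mem : ∀ᶠ c : ℝ in nhdsWithin 0 (Set.Ioi 0), c • x ∈ s :=
      (hs.eventually_nhdsNE_zero x).filter_mono (nhdsGT_le_nhdsNE 0)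
    obtain ⟨c, hcx, hc⟩ := (small_smul_mem.and self_mem_nhdsWithin).exists
    exact nonneg_of_mul_nonneg_right (by simpa using hf _ hcx) hc
  ext x
  exact le_antisymm (by simpa using f_nonneg (-x)) (f_nonneg x)

lemma linearMap_eq_zero_of_nonneg_of_absorbent_convexHull (hs : Absorbent ℝ (convexHull ℝ s))
    (hf : ∀ x ∈ s, 0 ≤ f x) : f = 0 :=
  linearMap_eq_zero_of_nonneg_on_absorbent hs
    (convexHull_min hf (convex_halfSpace_ge f.isLinear 0))

lemma linearMap_eq_zero_of_forall_ne_of_absorbent_convexHull (hs : Absorbent ℝ (convexHull ℝ s))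
    (x₀ : E) (hf : ∀ x ∈ s, x ≠ x₀ → f x = 0) : f = 0 := by
  wlog hx₀ : 0 ≤ f x₀ generalizing f
  · exact neg_eq_zero.1 <| this (f := -f) (by simpa using hf) (by simpa using (not_le.1 hx₀).le)
  refine linearMap_eq_zero_of_nonneg_of_absorbent_convexHull hs fun x hx => ?_
  rcases eq_or_ne x x₀ with rfl | hne
  · exact hx₀
  · exact (hf x hx hne).ge

end LinearFunctionals

section Polytopes

variable {E : Type*} [AddCommGroup E] [Module ℝ E] [TopologicalSpace E] [IsTopologicalAddGroup E]
  [ContinuousSMul ℝ E] [T2Space E] [LocallyConvexSpace ℝ E] {s : Set E}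

lemma convexHull_extremePoints_convexHull_of_finite (hs : s.Finite) :
    convexHull ℝ ((convexHull ℝ s).extremePoints ℝ) = convexHull ℝ s := by
  have extremePoints_finite : ((convexHull ℝ s).extremePoints ℝ).Finite :=
    hs.subset extremePoints_convexHull_subset
  rw [← (extremePoints_finite.isClosed_convexHull (𝕜 := ℝ)).closure_eq]
  exact closure_convexHull_extremePoints (hs.isCompact_convexHull (𝕜 := ℝ)) (convex_convexHull ℝ s)

lemma linearMap_eq_zero_of_forall_extremePoints_ne (hs : s.Finite)
    (h0 : 0 ∈ interior (convexHull ℝ s)) {f : E →ₗ[ℝ] ℝ} (x₀ : E)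
    (hf : ∀ x ∈ (convexHull ℝ s).extremePoints ℝ, x ≠ x₀ → f x = 0) : f = 0 := by
  refine linearMap_eq_zero_of_forall_ne_of_absorbent_convexHull ?_ x₀ hf
  rw [convexHull_extremePoints_convexHull_of_finite hs]
  exact absorbent_nhds_zero (mem_interior_iff_mem_nhds.1 h0)

end Polytopes

lemma linearIndepOn_mkQ_single {R ι : Type*} [Ring R] [Finite ι] [DecidableEq ι] {S : Set ι}
    {L : Submodule R (ι → R)} (hL : ∀ x ∈ L, (∀ l ∉ S, x l = 0) → x = 0) :
    LinearIndepOn R (fun l => L.mkQ (Pi.single l 1)) S := by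
  have disjoint_spanSubset : Disjoint (Pi.spanSubset R S) L :=
    Submodule.disjoint_def.2 fun x hxS hxL => hL x hxL (Pi.mem_spanSubset_iff.1 hxS)
  have basisFun_linearIndepOn : LinearIndepOn R (Pi.basisFun R ι) S :=
    (Pi.basisFun R ι).linearIndependent.linearIndepOn S
  simp_rw [← Pi.basisFun_apply]
  refine basisFun_linearIndepOn.map (f := L.mkQ) ?_
  rwa [Submodule.ker_mkQ, ← Set.image_eq_range]

lemma algebraLinearMap_compLeft_intCast {κ : Type*} (x : κ → ℤ) :
    (Algebra.linearMap ℚ ℝ).compLeft κ (fun k => (x k : ℚ)) = fun k => (x k : ℝ) := by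
  ext
  simp

theorem batyrev_classes_linearly_independent_general {R M E ι : Type*}
    [CommRing R] [Algebra R ℝ] [FaithfulSMul R ℝ] [AddCommGroup M] [Module R M]
    [AddCommGroup E] [Module ℝ E] [Module R E] [IsScalarTower R ℝ E]
    [TopologicalSpace E] [IsTopologicalAddGroup E] [ContinuousSMul ℝ E] [T2Space E]
    [LocallyConvexSpace ℝ E] [Finite ι] [DecidableEq ι]
    {toReal : M →ₗ[R] E} (h_baseChange : IsBaseChange ℝ toReal) (v : ι → M)
    (h0 : 0 ∈ interior (convexHull ℝ (Set.range fun l => toReal (v l)))) (i : ι) :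
    LinearIndepOn R
      (fun l => (LinearMap.range (LinearMap.pi fun l => Module.Dual.eval R M (v l))).mkQ
        (Pi.single l 1))
      ({l | toReal (v l) ∉
        (convexHull ℝ (Set.range fun l => toReal (v l))).extremePoints ℝ} ∪ {i}) := by
  set P := convexHull ℝ (Set.range fun l => toReal (v l))
  refine linearIndepOn_mkQ_single ?_
  rintro _ ⟨ν, rfl⟩ hν
  let νℝ : E →ₗ[ℝ] ℝ := h_baseChange.lift (Algebra.linearMap R ℝ ∘ₗ ν)
  have νℝ_toReal (x : M) : νℝ (toReal x) = algebraMap R ℝ (ν x) := h_baseChange.lift_eq _ x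
  have νℝ_eq_zero : νℝ = 0 := by
    refine linearMap_eq_zero_of_forall_extremePoints_ne (Set.finite_range _) h0 (toReal (v i))
      fun x hx hxi => ?_
    obtain ⟨l, rfl⟩ := extremePoints_convexHull_subset hx
    have hl : l ∉ {l | toReal (v l) ∉ P.extremePoints ℝ} ∪ {i} := by
      rintro (hlT | rfl)
      exacts [hlT hx, hxi rfl]
    have ν_apply_eq_zero : ν (v l) = 0 := hν l hl
    rw [νℝ_toReal, ν_apply_eq_zero, map_zero]
  ext l
  apply FaithfulSMul.algebraMap_injective R ℝ
  change algebraMap R ℝ (ν (v l)) = algebraMap R ℝ 0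
  rw [← νℝ_toReal, νℝ_eq_zero, LinearMap.zero_apply, map_zero]

/-- Let `n, m ≥ 1` and `v₁, …, v_m ∈ ℤⁿ` with `0` in the interior of
`P = conv{v₁, …, v_m} ⊆ ℝⁿ`.  Let `L ⊆ ℚᵐ` be the subspace of vectors
`(⟨ν, v₁⟩, …, ⟨ν, v_m⟩)` for `ℚ`-linear functionals `ν` on `ℚⁿ`.  Fix `i` and let
`T = {l : v_l is not an extreme point of P}`.  Then the images in `ℚᵐ/L` of the standard
basis vectors `e_l`, `l ∈ T ∪ {i}`, form a linearly independent family. -/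
theorem batyrev_classes_linearly_independent
    (n m : ℕ) (hn : 1 ≤ n) (hm : 1 ≤ m) (v : Fin m → Fin n → ℤ)
    (h0 : (0 : Fin n → ℝ) ∈
      interior (convexHull ℝ (Set.range fun l => fun k => ((v l k : ℝ)))))
    (i : Fin m) :
    LinearIndependent ℚ
      (fun l : ({l : Fin m | (fun k => ((v l k : ℝ))) ∉
          Set.extremePoints ℝ (convexHull ℝ (Set.range fun l => fun k => ((v l k : ℝ))))}
            ∪ {i} : Set (Fin m)) =>
        (Submodule.Quotient.mk (Pi.single (l : Fin m) (1 : ℚ)) :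
          (Fin m → ℚ) ⧸ LinearMap.range (evalOnRays n m v))) := by
  have h_indep := batyrev_classes_linearly_independent_general
    ((IsBaseChange.linearMap ℚ ℝ).finitePow (Fin n)) (fun l k => (v l k : ℚ))
    (by simpa only [algebraLinearMap_compLeft_intCast] using h0) i
  simp only [algebraLinearMap_compLeft_intCast] at h_indep
  exact h_indep
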